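/- arXiv:2406.00709 — 3 statements merged into one kernel-verified Lean document; each statement's English description precedes it below -/
import Mathlib

section
/- Let R be a ring, e ∈ R an idempotent, N a left R-module, and N' an additive subgroup of N such that e•x = x for every x ∈ N' and (e·r·e)•x ∈ N' for every r ∈ R and x ∈ N'. Let M be the R-submodule of N generated by N'. Then e•M = N', i.e. {e•m : m ∈ M} = N'. (This identity is the key step in the paper's proof of the adjunction between the functors τ* and τ∗: every corner-stable submodule N' of e•N is recovered by cornering the R-submodule it generates.) -/
/-- A corner-stable subgroup `N'` of `e • N` is recovered by cornering the
`R`-submodule it generates: `e • span R N' = N'`. -/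
theorem corner_of_span (R : Type*) [Ring R] (e : R) (he : e * e = e)
    (N : Type*) [AddCommGroup N] [Module R N]
    (N' : AddSubgroup N)
    (h1 : ∀ x ∈ N', e • x = x)
    (h2 : ∀ (r : R), ∀ x ∈ N', (e * r * e) • x ∈ N') :
    (fun m : N => e • m) '' (Submodule.span R (N' : Set N) : Set N) = (N' : Set N) := by
  ext y
  constructor
  · rintro ⟨m, hm, rfl⟩
    have key : ∀ r : R, (e * r) • m ∈ N' := by
      induction hm using Submodule.span_induction with
      | mem x hx =>
        intro r
        have h := h2 r x hx
        rwa [mul_smul, h1 x hx] at h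
      | zero => intro r; rw [smul_zero]; exact N'.zero_mem
      | add x y _ _ hx hy => intro r; rw [smul_add]; exact N'.add_mem (hx r) (hy r)
      | smul a x _ hx => intro r; rw [← mul_smul, mul_assoc]; exact hx (r * a)
    have h := key 1
    rwa [mul_one] at h
  · intro hy
    exact ⟨y, Submodule.subset_span hy, h1 y hy⟩
end

section
/- Let k be a field, A an associative k-algebra, and e ∈ A an idempotent. Suppose A·e is finitely generated as a right module over the corner ring eAe, i.e. there exist x₁, …, x_n ∈ A·e such that every element of A·e is a finite sum Σᵢ xᵢ·(e·rᵢ·e) with rᵢ ∈ A. Let N be a left A-module and N' a finite-dimensional k-subspace of N such that e•x = x for every x ∈ N' and (e·r·e)•x ∈ N' for every r ∈ A and x ∈ N'. Then the A-submodule of N generated by N' is finite-dimensional over k. (This is the module-level content of the paper's lemma that the cornering functor j_! takes finite-dimensional modules to finite-dimensional modules.) -/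
/-- If `A·e` is finitely generated as a right `eAe`-module, then the `A`-submodule
generated by a finite-dimensional corner-stable subspace `N'` of a left `A`-module `N`
is finite-dimensional over `k`. -/
theorem span_of_corner_findim (k : Type*) [Field k] (A : Type*) [Ring A] [Algebra k A]
    (e : A) (he : e * e = e)
    (hfg : ∃ (n : ℕ) (x : Fin n → A), (∀ i, ∃ a : A, x i = a * e) ∧
      ∀ a : A, ∃ r : Fin n → A, a * e = ∑ i, x i * (e * r i * e))
    (N : Type*) [AddCommGroup N] [Module A N] [Module k N] [IsScalarTower k A N]
    (N' : Submodule k N) [FiniteDimensional k N']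
    (h1 : ∀ x ∈ N', e • x = x)
    (h2 : ∀ (r : A), ∀ x ∈ N', (e * r * e) • x ∈ N') :
    FiniteDimensional k
      (Submodule.restrictScalars k (Submodule.span A (N' : Set N))) := by
  obtain ⟨n, x, -, hx⟩ := hfg
  let W : Submodule k N := ⨆ i, N'.map (Algebra.lsmul k k N (x i))
  have key : ∀ y ∈ Submodule.span A (N' : Set N), ∀ a : A, a • y ∈ W := by
    intro y hy
    induction hy using Submodule.span_induction with
    | mem y hy =>
      intro a
      obtain ⟨r, hr⟩ := hx a
      rw [← h1 y hy, ← mul_smul, hr, Finset.sum_smul]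
      refine Submodule.sum_mem _ fun i _ => ?_
      rw [mul_smul]
      exact Submodule.mem_iSup_of_mem i ⟨_, h2 (r i) y hy, rfl⟩
    | zero => intro a; rw [smul_zero]; exact W.zero_mem
    | add y z _ _ ihy ihz => intro a; rw [smul_add]; exact W.add_mem (ihy a) (ihz a)
    | smul b y _ ih => intro a; rw [← mul_smul]; exact ih _
  have hle : Submodule.restrictScalars k (Submodule.span A (N' : Set N)) ≤ W := by
    intro y hy
    simpa using key y hy 1
  have hW : FiniteDimensional k W := by
    change FiniteDimensional k (⨆ i, N'.map (Algebra.lsmul k k N (x i)) : Submodule k N)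
    infer_instance
  exact Submodule.finiteDimensional_of_le hle
end

section
/- Let k be a field, A an associative k-algebra, and e ∈ A an idempotent such that A·e is finitely generated as a right module over the corner ring eAe (there exist x₁, …, x_n ∈ A·e with A·e = Σᵢ xᵢ·(eAe)). Let N be a left A-module and let N' be a finite-dimensional k-subspace of N with e•x = x for all x ∈ N' and (e·r·e)•x ∈ N' for all r ∈ A, x ∈ N'. Then there exists a finite-dimensional A-submodule N₁ of N such that e•N₁ = N'. (This is precisely the paper's intermediate claim, in the proof of the adjunction of τ* and τ∗, that every finite-dimensional submodule of j*N is the image under j* of a finite-dimensional submodule of N.) -/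
/-- If `A·e` is finitely generated as a right `eAe`-module, then every
finite-dimensional corner-stable subspace `N'` of a left `A`-module `N` is the
corner `e • N₁` of a finite-dimensional `A`-submodule `N₁` of `N`. -/
theorem corner_lifts_findim (k : Type*) [Field k] (A : Type*) [Ring A] [Algebra k A]
    (e : A) (he : e * e = e)
    (hfg : ∃ (n : ℕ) (x : Fin n → A), (∀ i, ∃ a : A, x i = a * e) ∧
      ∀ a : A, ∃ r : Fin n → A, a * e = ∑ i, x i * (e * r i * e))
    (N : Type*) [AddCommGroup N] [Module A N] [Module k N] [IsScalarTower k A N]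
    (N' : Submodule k N) [FiniteDimensional k N']
    (h1 : ∀ x ∈ N', e • x = x)
    (h2 : ∀ (r : A), ∀ x ∈ N', (e * r * e) • x ∈ N') :
    ∃ N₁ : Submodule A N,
      FiniteDimensional k (Submodule.restrictScalars k N₁) ∧
      (fun x : N => e • x) '' (N₁ : Set N) = (N' : Set N) := by
  obtain ⟨n, x, -, hx⟩ := hfg
  refine ⟨Submodule.span A (N' : Set N), ?_, ?_⟩
  · have hle : Submodule.restrictScalars k (Submodule.span A (N' : Set N)) ≤
        ⨆ i, N'.map (Algebra.lsmul k k N (x i)) := by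
      intro y hy
      have hy' : y ∈ Submodule.span A (N' : Set N) := hy
      induction hy' using Submodule.closure_induction with
      | zero => exact Submodule.zero_mem _
      | add u v hu hv ihu ihv => exact Submodule.add_mem _ (ihu hu) (ihv hv)
      | smul_mem a z hz =>
        obtain ⟨r, hr⟩ := hx a
        have hz' : z ∈ N' := hz
        have h : a • z = ∑ i, x i • ((e * r i * e) • z) := by
          calc a • z = (a * e) • z := by rw [mul_smul, h1 z hz']
            _ = _ := by rw [hr, Finset.sum_smul]; simp only [mul_smul]
        rw [h]
        refine Submodule.sum_mem _ fun i _ => ?_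
        exact Submodule.mem_iSup_of_mem i ⟨_, h2 (r i) z hz', rfl⟩
    exact Submodule.finiteDimensional_of_le hle
  · ext y
    constructor
    · rintro ⟨w, hw, rfl⟩
      have hw' : w ∈ Submodule.span A (N' : Set N) := hw
      clear hw
      change e • w ∈ N'
      induction hw' using Submodule.closure_induction with
      | zero => rw [smul_zero]; exact N'.zero_mem
      | add u v hu hv ihu ihv => rw [smul_add]; exact N'.add_mem ihu ihv
      | smul_mem a z hz =>
        have hz' : z ∈ N' := hz
        have h := h2 a z hz'
        rwa [mul_smul, h1 z hz', mul_smul] at h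
    · intro hy
      exact ⟨y, Submodule.subset_span hy, h1 y hy⟩
end
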